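/- Let 1, α₁, α₂ be linearly independent over ℤ, let m_ν denote the sequence of best approximations, and suppose that for some index ν the determinant of the 3×3 matrix with rows m_{ν−1}, m_ν, m_{ν+1} is nonzero. Then at least one of the following two statements holds. (i) There exists an integer point (x₁⁰, x₂⁰) with x₁⁰ > 0, x₂⁰ > 0, M_{ν+2} ≤ max{x₁⁰, x₂⁰} ≤ 4·M_{ν+2}, and ‖α₁x₁⁰ + α₂x₂⁰‖ ≤ 16·(max{x₁⁰, x₂⁰})^{−2}. (ii) There exists an integer point (x₁⁰, x₂⁰) with x₁⁰ > 0, x₂⁰ > 0, max{x₁⁰, x₂⁰} ≤ 240·M_{ν+1}^τ·M_ν^{−1/τ}, and ‖α₁x₁⁰ + α₂x₂⁰‖ ≤ 24^τ·M_ν^{(1−τ)/τ}·(max{x₁⁰, x₂⁰})^{−τ}. -/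

import Mathlib

/-- distance from a real number to the nearest integer -/
noncomputable def nint (ξ : ℝ) : ℝ := |ξ - round ξ|

/-- `1, α₁, α₂` are linearly independent over `ℤ` -/
def ZLinIndep (α₁ α₂ : ℝ) : Prop :=
  ∀ a b c : ℤ, (a : ℝ) + b * α₁ + c * α₂ = 0 → a = 0 ∧ b = 0 ∧ c = 0

/-- the golden ratio τ = (1+√5)/2 -/
noncomputable def tau : ℝ := (1 + Real.sqrt 5) / 2

/-- the value of the linear form ζ(m) = m₀ + m₁α₁ + m₂α₂ at an integer vector m -/
noncomputable def zform (α₁ α₂ : ℝ) (m : ℤ × ℤ × ℤ) : ℝ :=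
  (m.1 : ℝ) + m.2.1 * α₁ + m.2.2 * α₂

/-- the height M(m) = max{|m₁|, |m₂|} of an integer vector m = (m₀, m₁, m₂) -/
def hgt (m : ℤ × ℤ × ℤ) : ℤ := max |m.2.1| |m.2.2|

/-- `m` is a best approximation (in the sense of the linear form) for `α₁, α₂`:
`|ζ(m)|` is minimal among all integer vectors `n` with `0 < max{|n₁|,|n₂|} ≤ max{|m₁|,|m₂|}`. -/
noncomputable def IsBestApprox (α₁ α₂ : ℝ) (m : ℤ × ℤ × ℤ) : Prop :=
  0 < hgt m ∧
  ∀ n : ℤ × ℤ × ℤ, 0 < hgt n → hgt n ≤ hgt m →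
    |zform α₁ α₂ m| ≤ |zform α₁ α₂ n|

/-- `m` and `m'` are two consecutive best approximations (`m = m_ν`, `m' = m_{ν+1}`):
both are best approximations, `M(m) < M(m')`, and no best approximation has height
strictly between them. -/
noncomputable def ConsecutiveBest (α₁ α₂ : ℝ) (m m' : ℤ × ℤ × ℤ) : Prop :=
  IsBestApprox α₁ α₂ m ∧ IsBestApprox α₁ α₂ m' ∧ hgt m < hgt m' ∧
  ∀ n : ℤ × ℤ × ℤ, IsBestApprox α₁ α₂ n → hgt n ≤ hgt m ∨ hgt m' ≤ hgt n

/-!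
Alternative (ii) always holds. It asks for an integer point `n` whose two height coordinates have
the same sign, with height and `|ζ(n)|` under control. Put `B = M_ν`, `C = M_{ν+1}`, and suppose
that `m_ν` and `m_{ν+1}` lie in the quadrant `x₁ ≥ 0 ≥ x₂`; otherwise, up to sign, one of them
serves as `n`.

* If `C ≤ 4 B`, express the real point with `ζ = 0` and `x₁ = x₂ = 3 C / 2` in the basis
  `m_{ν-1}, m_ν, m_{ν+1}` and round its coefficients.
* If `C ≥ 4 B` and `ζ_ν B C (C / B) ^ τ ≤ 1`, the linear form is so small at `m_ν` and `m_{ν+1}`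
  that a nonzero determinant forces `4 |b₁ c₂ - b₂ c₁| > B ^ 2`, where `b = m_ν` and
  `c = m_{ν+1}`. Hence the line `4 c - k b` passes from `x₁ ≥ 0 ≥ x₂` to the opposite quadrant
  through one in which the signs agree, and spends a whole step of `k` there.
* Otherwise, either `m_{ν+1} - m_ν` has coordinates of the same sign, or the determinant of the
  forms `ζ` and `x₁ - x₂` at `m_ν, m_{ν+1}` is at least `ζ_ν C`. Consecutive best approximations
  extend to a basis of `ℤ³`, so there is `v` with `det(v, m_ν, m_{ν+1}) = ±1`. Some point with
  `ζ = 0` and `x₁ = x₂` between `C` and `C + 1 / (ζ_ν C)` has an integer coefficient at `v`.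
  Rounding its other two coefficients gives `n` with `|ζ(n)| ≤ ζ_ν`.

The bounds of the last two cases agree at the threshold because `τ ^ 2 = τ + 1`.
-/

section GoldenRatio

lemma tau_sq : tau ^ 2 = tau + 1 := Real.goldenRatio_sq

lemma one_lt_tau : 1 < tau := Real.one_lt_goldenRatio

lemma tau_lt_two : tau < 2 := Real.goldenRatio_lt_two

lemma tau_pos : 0 < tau := zero_lt_one.trans one_lt_tau

lemma one_div_tau : 1 / tau = tau - 1 := by
  rw [div_eq_iff tau_pos.ne']
  linarith [tau_sq]

lemma one_sub_tau_div_tau : (1 - tau) / tau = tau - 2 := by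
  rw [sub_div, div_self tau_pos.ne', one_div_tau]
  ring

lemma le_rpow_tau {x : ℝ} (hx : 1 ≤ x) : x ≤ x ^ tau :=
  Real.self_le_rpow_of_one_le hx one_lt_tau.le

end GoldenRatio

variable {α₁ α₂ : ℝ} {a b c n p q r : ℤ × ℤ × ℤ}

section Height

lemma hgt_pos_iff : 0 < hgt n ↔ n.2 ≠ 0 := by
  simp [hgt, Prod.ext_iff, imp_iff_not_or]

lemma hgt_nonneg (n : ℤ × ℤ × ℤ) : 0 ≤ hgt n := le_max_of_le_left (abs_nonneg _)

@[simp] lemma hgt_neg (n : ℤ × ℤ × ℤ) : hgt (-n) = hgt n := by simp [hgt]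

lemma cast_hgt (n : ℤ × ℤ × ℤ) : (hgt n : ℝ) = max |(n.2.1 : ℝ)| |(n.2.2 : ℝ)| := by
  simp [hgt]

lemma abs_fst_le_hgt (n : ℤ × ℤ × ℤ) : |(n.2.1 : ℝ)| ≤ hgt n := by simp [cast_hgt]

lemma abs_snd_le_hgt (n : ℤ × ℤ × ℤ) : |(n.2.2 : ℝ)| ≤ hgt n := by simp [cast_hgt]

end Height

section LinearForm

@[simp] lemma zform_add (p q : ℤ × ℤ × ℤ) :
    zform α₁ α₂ (p + q) = zform α₁ α₂ p + zform α₁ α₂ q := by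
  simp only [zform, Prod.fst_add, Prod.snd_add, Int.cast_add]
  ring

@[simp] lemma zform_zsmul (k : ℤ) (p : ℤ × ℤ × ℤ) :
    zform α₁ α₂ (k • p) = k * zform α₁ α₂ p := by
  simp only [zform, Prod.smul_fst, Prod.smul_snd, smul_eq_mul, Int.cast_mul]
  ring

@[simp] lemma zform_neg (p : ℤ × ℤ × ℤ) : zform α₁ α₂ (-p) = -zform α₁ α₂ p := by
  simpa using zform_zsmul (α₁ := α₁) (α₂ := α₂) (-1) p

@[simp] lemma zform_sub (p q : ℤ × ℤ × ℤ) :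
    zform α₁ α₂ (p - q) = zform α₁ α₂ p - zform α₁ α₂ q := by
  rw [sub_eq_add_neg, zform_add, zform_neg, sub_eq_add_neg]

lemma ZLinIndep.zform_ne_zero (h : ZLinIndep α₁ α₂) (hn : n ≠ 0) : zform α₁ α₂ n ≠ 0 := by
  intro h0
  obtain ⟨h1, h2, h3⟩ := h _ _ _ h0
  exact hn (Prod.ext h1 (Prod.ext h2 h3))

lemma nint_le_abs_zform (n : ℤ × ℤ × ℤ) :
    nint (α₁ * n.2.1 + α₂ * n.2.2) ≤ |zform α₁ α₂ n| := by
  refine (round_le _ (-n.1)).trans_eq (congrArg _ ?_)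
  rw [zform]
  push_cast
  ring

lemma exists_abs_zform_eq_nint (x : ℤ × ℤ) :
    ∃ n, n.2 = x ∧ |zform α₁ α₂ n| = nint (α₁ * x.1 + α₂ * x.2) := by
  refine ⟨(-round (α₁ * x.1 + α₂ * x.2), x), rfl, congrArg _ ?_⟩
  rw [zform]
  push_cast
  ring

end LinearForm

section BestApproximations

/- Pigeonhole: the `H ^ 2` points `(x, y)` with `0 ≤ x, y < H` have fractional parts
`{α₁ x + α₂ y}` in `H ^ 2 - 1` intervals of equal length. -/
lemma exists_hgt_lt_and_abs_zform_le (α₁ α₂ : ℝ) {H : ℤ} (hH : 2 ≤ H) :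
    ∃ n, 0 < hgt n ∧ hgt n < H ∧ |zform α₁ α₂ n| ≤ 1 / ((H : ℝ) ^ 2 - 1) := by
  have hHr : (2 : ℝ) ≤ H := by exact_mod_cast hH
  have hN : (0 : ℝ) < (H : ℝ) ^ 2 - 1 := by nlinarith
  let ξ : ℤ × ℤ → ℝ := fun x ↦ x.1 * α₁ + x.2 * α₂
  let box : ℤ × ℤ → ℤ := fun x ↦ ⌊Int.fract (ξ x) * ((H : ℝ) ^ 2 - 1)⌋
  have hcard : (Finset.Ico 0 (H ^ 2 - 1)).card < (Finset.Ico 0 H ×ˢ Finset.Ico 0 H).card := by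
    zify
    rw [Finset.card_product, Nat.cast_mul, Int.card_Ico_of_le 0 H (by omega),
      Int.card_Ico_of_le 0 (H ^ 2 - 1) (by nlinarith)]
    nlinarith
  have hbox (x : ℤ × ℤ) : box x ∈ Finset.Ico 0 (H ^ 2 - 1) := by
    rw [Finset.mem_Ico, Int.floor_lt]
    push_cast
    exact ⟨Int.floor_nonneg.2 (mul_nonneg (Int.fract_nonneg _) hN.le),
      mul_lt_of_lt_one_left hN (Int.fract_lt_one _)⟩
  obtain ⟨x, hx, y, hy, hxy, heq⟩ :=
    Finset.exists_ne_map_eq_of_card_lt_of_maps_to hcard fun x _ ↦ hbox x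
  simp only [Finset.mem_product, Finset.mem_Ico] at hx hy
  refine ⟨(⌊ξ y⌋ - ⌊ξ x⌋, x - y), hgt_pos_iff.2 (sub_ne_zero.2 hxy), ?_, ?_⟩
  · refine max_lt (abs_lt.2 ?_) (abs_lt.2 ?_) <;>
      simp only [Prod.fst_sub, Prod.snd_sub] <;> omega
  · have h := Int.abs_sub_lt_one_of_floor_eq_floor heq
    rw [← sub_mul, abs_mul, abs_of_pos hN] at h
    rw [le_div_iff₀ hN]
    refine le_of_eq_of_le (congrArg (|·| * _) ?_) h.le
    simp only [zform, Int.fract, ξ, Prod.fst_sub, Prod.snd_sub]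
    push_cast
    ring

lemma exists_isBestApprox (α₁ α₂ : ℝ) {H : ℤ} (hH : 0 < H) :
    ∃ m, IsBestApprox α₁ α₂ m ∧ hgt m ≤ H ∧
      ∀ n, 0 < hgt n → hgt n ≤ H → |zform α₁ α₂ m| ≤ |zform α₁ α₂ n| := by
  let s : Set (ℤ × ℤ) := {x | x ≠ 0 ∧ max |x.1| |x.2| ≤ H}
  have hs : s.Finite := by
    refine (Set.finite_Icc (-H, -H) (H, H)).subset fun x hx ↦ ?_
    obtain ⟨h1, h2⟩ := max_le_iff.1 hx.2
    exact ⟨⟨(abs_le.1 h1).1, (abs_le.1 h2).1⟩, (abs_le.1 h1).2, (abs_le.1 h2).2⟩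
  obtain ⟨x, hx, hmin⟩ := Set.exists_min_image s (fun x ↦ nint (α₁ * x.1 + α₂ * x.2)) hs
    ⟨(1, 0), by simp, by simpa using (show 1 ≤ H from hH)⟩
  obtain ⟨m, rfl, hm⟩ := exists_abs_zform_eq_nint (α₁ := α₁) (α₂ := α₂) x
  have hle (n : ℤ × ℤ × ℤ) (h0 : 0 < hgt n) (hn : hgt n ≤ H) :
      |zform α₁ α₂ m| ≤ |zform α₁ α₂ n| :=
    hm.trans_le ((hmin n.2 ⟨hgt_pos_iff.1 h0, hn⟩).trans (nint_le_abs_zform n))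
  exact ⟨m, ⟨hgt_pos_iff.2 hx.1, fun n h0 hn ↦ hle n h0 (hn.trans hx.2)⟩, hx.2, hle⟩

lemma IsBestApprox.neg (h : IsBestApprox α₁ α₂ b) : IsBestApprox α₁ α₂ (-b) := by
  simpa [IsBestApprox] using h

namespace ConsecutiveBest

lemma neg_left (h : ConsecutiveBest α₁ α₂ b c) : ConsecutiveBest α₁ α₂ (-b) c :=
  ⟨h.1.neg, by simpa using h.2⟩

lemma neg_right (h : ConsecutiveBest α₁ α₂ b c) : ConsecutiveBest α₁ α₂ b (-c) :=
  ⟨h.1, h.2.1.neg, by simpa using h.2.2⟩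

lemma hgt_left_pos (h : ConsecutiveBest α₁ α₂ b c) : (0 : ℝ) < hgt b := by
  exact_mod_cast h.1.1

lemma hgt_lt (h : ConsecutiveBest α₁ α₂ b c) : (hgt b : ℝ) < hgt c := by
  exact_mod_cast h.2.2.1

lemma two_le_hgt_right (h : ConsecutiveBest α₁ α₂ b c) : 2 ≤ hgt c := by
  linarith [h.1.1, h.2.2.1]

lemma abs_zform_le (h : ConsecutiveBest α₁ α₂ b c) (h0 : 0 < hgt n) (hn : hgt n < hgt c) :
    |zform α₁ α₂ b| ≤ |zform α₁ α₂ n| := by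
  obtain ⟨m, hm, hmn, hmin⟩ := exists_isBestApprox α₁ α₂ h0
  rcases h.2.2.2 m hm with hmb | hcm
  · exact (h.1.2 m hm.1 hmb).trans (hmin n h0 le_rfl)
  · exact absurd (hcm.trans hmn) hn.not_ge

lemma abs_zform_mul_hgt_sq_le (h : ConsecutiveBest α₁ α₂ b c) :
    |zform α₁ α₂ b| * hgt c ^ 2 ≤ 4 / 3 := by
  have h2 : (2 : ℝ) ≤ hgt c := by exact_mod_cast h.two_le_hgt_right
  obtain ⟨n, h0, hn, hz⟩ := exists_hgt_lt_and_abs_zform_le α₁ α₂ h.two_le_hgt_right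
  have hb := (h.abs_zform_le h0 hn).trans hz
  rw [le_div_iff₀ (by nlinarith)] at hb
  have h3 : |zform α₁ α₂ b| * 3 ≤ |zform α₁ α₂ b| * ((hgt c : ℝ) ^ 2 - 1) := by
    gcongr
    nlinarith
  linarith

lemma abs_zform_right_le (h : ConsecutiveBest α₁ α₂ b c) :
    |zform α₁ α₂ c| ≤ |zform α₁ α₂ b| :=
  h.2.1.2 b h.1.1 h.2.2.1.le

lemma abs_zform_lt (hind : ZLinIndep α₁ α₂) (h : ConsecutiveBest α₁ α₂ b c) :
    |zform α₁ α₂ c| < |zform α₁ α₂ b| := by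
  refine h.abs_zform_right_le.lt_of_ne fun heq ↦ ?_
  have hne {b' : ℤ × ℤ × ℤ} (hb' : hgt b' = hgt b) : c - b' ≠ 0 := by
    intro h0
    exact h.2.2.1.ne' ((congrArg hgt (sub_eq_zero.1 h0)).trans hb')
  rcases abs_eq_abs.1 heq with hz | hz
  · exact hind.zform_ne_zero (hne rfl) (by simp [hz])
  · exact hind.zform_ne_zero (hne (hgt_neg b)) (by simp [hz])

lemma abs_zform_left_pos (hind : ZLinIndep α₁ α₂) (h : ConsecutiveBest α₁ α₂ b c) :
    0 < |zform α₁ α₂ b| :=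
  (abs_nonneg _).trans_lt (h.abs_zform_lt hind)

end ConsecutiveBest

end BestApproximations

section Determinant

/-- The determinant of the matrix with rows `p`, `q`, `r`; the condition of the theorem is
`rowDet m_{ν-1} m_ν m_{ν+1} ≠ 0`. -/
def rowDet (p q r : ℤ × ℤ × ℤ) : ℤ :=
  Matrix.det !![p.1, p.2.1, p.2.2; q.1, q.2.1, q.2.2; r.1, r.2.1, r.2.2]

lemma rowDet_eq (p q r : ℤ × ℤ × ℤ) : rowDet p q r =
    p.1 * (q.2.1 * r.2.2 - q.2.2 * r.2.1) + p.2.1 * (q.2.2 * r.1 - q.1 * r.2.2) +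
      p.2.2 * (q.1 * r.2.1 - q.2.1 * r.1) := by
  simp only [rowDet, Matrix.det_fin_three, Matrix.of_apply, Matrix.cons_val', Matrix.cons_val_zero,
    Matrix.cons_val_one, Matrix.cons_val, Matrix.cons_val_fin_one]
  ring

-- Column operations replace the first column by the values of `zform`.
lemma cast_rowDet (α₁ α₂ : ℝ) (p q r : ℤ × ℤ × ℤ) : (rowDet p q r : ℝ) =
    zform α₁ α₂ p * (q.2.1 * r.2.2 - q.2.2 * r.2.1) +
      p.2.1 * (q.2.2 * zform α₁ α₂ r - zform α₁ α₂ q * r.2.2) +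
        p.2.2 * (zform α₁ α₂ q * r.2.1 - q.2.1 * zform α₁ α₂ r) := by
  rw [rowDet_eq, zform, zform, zform]
  push_cast
  ring

lemma rowDet_neg_mid (p q r : ℤ × ℤ × ℤ) : rowDet p (-q) r = -rowDet p q r := by
  simp only [rowDet_eq, Prod.fst_neg, Prod.snd_neg]
  ring

lemma rowDet_neg_right (p q r : ℤ × ℤ × ℤ) : rowDet p q (-r) = -rowDet p q r := by
  simp only [rowDet_eq, Prod.fst_neg, Prod.snd_neg]
  ring

lemma eq_zero_of_smul_add_smul_eq_zero (hdet : rowDet p q r ≠ 0) {s t : ℤ}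
    (h : s • q + t • r = 0) : s = 0 ∧ t = 0 := by
  simp only [Prod.ext_iff, Prod.fst_add, Prod.snd_add, Prod.smul_fst, Prod.smul_snd, smul_eq_mul,
    Prod.fst_zero, Prod.snd_zero] at h
  obtain ⟨h0, h1, h2⟩ := h
  have hs : s * rowDet p q r = 0 := by
    rw [rowDet_eq]
    linear_combination (p.2.2 * r.2.1 - p.2.1 * r.2.2) * h0 +
      (p.1 * r.2.2 - p.2.2 * r.1) * h1 + (p.2.1 * r.1 - p.1 * r.2.1) * h2
  have ht : t * rowDet p q r = 0 := by
    rw [rowDet_eq]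
    linear_combination (p.2.1 * q.2.2 - p.2.2 * q.2.1) * h0 +
      (p.2.2 * q.1 - p.1 * q.2.2) * h1 + (p.1 * q.2.1 - p.2.1 * q.1) * h2
  exact ⟨(mul_eq_zero.1 hs).resolve_right hdet, (mul_eq_zero.1 ht).resolve_right hdet⟩

/-- The map `p ↦ rowDet p q r` as a linear form, so that its range is an ideal of `ℤ`. -/
def rowDetLinear (q r : ℤ × ℤ × ℤ) : (ℤ × ℤ × ℤ) →ₗ[ℤ] ℤ where
  toFun p := rowDet p q r
  map_add' p p' := by
    simp only [rowDet_eq, Prod.fst_add, Prod.snd_add]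
    ring
  map_smul' k p := by
    simp only [rowDet_eq, Prod.smul_fst, Prod.smul_snd, smul_eq_mul, RingHom.id_apply]
    ring

end Determinant

section Primitivity

lemma abs_le_half_add_of_mul_eq {g s t x y z : ℝ} (hg : 0 < g) (hs : 2 * |s| ≤ g)
    (ht : 2 * |t| ≤ g) (h : g * x = s * y + t * z) : |x| ≤ (|y| + |z|) / 2 := by
  have hx : g * |x| ≤ |s| * |y| + |t| * |z| := by
    rw [← abs_of_pos hg, ← abs_mul, h, ← abs_mul, ← abs_mul]
    exact abs_add_le _ _
  have hy : 2 * |s| * |y| ≤ g * |y| := by gcongr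
  have hz : 2 * |t| * |z| ≤ g * |z| := by gcongr
  refine le_of_mul_le_mul_left ?_ hg
  linarith

lemma exists_two_mul_abs_sub_mul_le (x : ℤ) {g : ℤ} (hg : g ≠ 0) :
    ∃ k : ℤ, 2 * |x - k * g| ≤ |g| := by
  refine ⟨round (x / g : ℚ), ?_⟩
  have h := abs_sub_round (x / g : ℚ)
  have hg' : (g : ℚ) ≠ 0 := by exact_mod_cast hg
  have hx : (x : ℚ) - round (x / g : ℚ) * g = (x / g - round (x / g : ℚ)) * g := by field_simp
  qify
  rw [hx, abs_mul]
  nlinarith [abs_nonneg (g : ℚ)]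

namespace ConsecutiveBest

-- A point of the parallelogram spanned by `b / 2` and `c / 2` is smaller than `c` in height and
-- smaller than `b` under `zform`.
lemma eq_zero_of_smul_eq (hind : ZLinIndep α₁ α₂) (h : ConsecutiveBest α₁ α₂ b c) {g s t : ℤ}
    (hg : 0 < g) (hs : 2 * |s| ≤ g) (ht : 2 * |t| ≤ g) (hn : g • n = s • b + t • c) : n = 0 := by
  have hgr : (0 : ℝ) < g := by exact_mod_cast hg
  have hsr : 2 * |(s : ℝ)| ≤ g := by exact_mod_cast hs
  have htr : 2 * |(t : ℝ)| ≤ g := by exact_mod_cast ht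
  have hn1 : (g : ℝ) * n.2.1 = s * b.2.1 + t * c.2.1 := by
    exact_mod_cast congrArg (fun m ↦ m.2.1) hn
  have hn2 : (g : ℝ) * n.2.2 = s * b.2.2 + t * c.2.2 := by
    exact_mod_cast congrArg (fun m ↦ m.2.2) hn
  have hnz : (g : ℝ) * zform α₁ α₂ n = s * zform α₁ α₂ b + t * zform α₁ α₂ c := by
    simpa only [zform_add, zform_zsmul] using congrArg (zform α₁ α₂) hn
  have hn1c := abs_le_half_add_of_mul_eq hgr hsr htr hn1
  have hn2c := abs_le_half_add_of_mul_eq hgr hsr htr hn2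
  have hnzb := abs_le_half_add_of_mul_eq hgr hsr htr hnz
  have hnc : hgt n < hgt c := by
    rify
    rw [cast_hgt n]
    apply max_lt <;>
      linarith [h.hgt_lt, abs_fst_le_hgt b, abs_snd_le_hgt b, abs_fst_le_hgt c, abs_snd_le_hgt c]
  have hzlt : |zform α₁ α₂ n| < |zform α₁ α₂ b| := by linarith [h.abs_zform_lt hind]
  have hn0 : n.2 = 0 := by
    by_contra h0
    exact (h.abs_zform_le (hgt_pos_iff.2 h0) hnc).not_gt hzlt
  have hb1 : |zform α₁ α₂ b| < 1 := by
    have h2 : (2 : ℝ) ≤ hgt c := by exact_mod_cast h.two_le_hgt_right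
    nlinarith [h.abs_zform_mul_hgt_sq_le]
  have hz0 : zform α₁ α₂ n = n.1 := by simp [zform, hn0]
  rw [hz0] at hzlt
  exact Prod.ext (Int.abs_lt_one_iff.1 (by exact_mod_cast hzlt.trans hb1)) hn0

lemma dvd_of_smul_eq (hind : ZLinIndep α₁ α₂) (h : ConsecutiveBest α₁ α₂ b c)
    (hdet : rowDet a b c ≠ 0) {g s t : ℤ} (hg : g ≠ 0) (hn : g • n = s • b + t • c) :
    g ∣ s ∧ g ∣ t := by
  obtain ⟨k, hk⟩ := exists_two_mul_abs_sub_mul_le s hg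
  obtain ⟨l, hl⟩ := exists_two_mul_abs_sub_mul_le t hg
  have hred : |g| • (g.sign • (n - k • b - l • c)) = (s - k * g) • b + (t - l * g) • c := by
    rw [smul_smul, mul_comm, Int.sign_mul_abs, smul_sub, smul_sub, hn]
    module
  have h0 := h.eq_zero_of_smul_eq hind (abs_pos.2 hg) hk hl hred
  rw [h0, smul_zero] at hred
  obtain ⟨hs, ht⟩ := eq_zero_of_smul_add_smul_eq_zero hdet hred.symm
  exact ⟨⟨k, by linarith⟩, ⟨l, by linarith⟩⟩

-- If `g` divides `b × c`, then `g` divides the coordinates of `c`, because `e × (b × c)` is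
-- `⟨c, e⟩ b - ⟨b, e⟩ c` for each basis vector `e`.
lemma isUnit_of_forall_dvd_rowDet (hind : ZLinIndep α₁ α₂) (h : ConsecutiveBest α₁ α₂ b c)
    (hdet : rowDet a b c ≠ 0) {g : ℤ} (hg : ∀ p, g ∣ rowDet p b c) : IsUnit g := by
  have hg0 : g ≠ 0 := by
    rintro rfl
    exact hdet (zero_dvd_iff.1 (hg a))
  obtain ⟨w₀, h₀⟩ := hg (1, 0, 0)
  obtain ⟨w₁, h₁⟩ := hg (0, 1, 0)
  obtain ⟨w₂, h₂⟩ := hg (0, 0, 1)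
  simp only [rowDet_eq, one_mul, zero_mul, add_zero, zero_add] at h₀ h₁ h₂
  have hdvd {m : ℤ × ℤ × ℤ} {s t : ℤ} (hm : g • m = s • b + t • c) : g ∣ s ∧ g ∣ t :=
    h.dvd_of_smul_eq hind hdet hg0 hm
  obtain ⟨c₀, hc₀⟩ := (hdvd (m := (0, -w₂, w₁)) (s := c.1) (t := -b.1) (by
    ext <;> simp <;> linarith)).1
  obtain ⟨c₁, hc₁⟩ := (hdvd (m := (w₂, 0, -w₀)) (s := c.2.1) (t := -b.2.1) (by
    ext <;> simp <;> linarith)).1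
  obtain ⟨c₂, hc₂⟩ := (hdvd (m := (-w₁, w₀, 0)) (s := c.2.2) (t := -b.2.2) (by
    ext <;> simp <;> linarith)).1
  refine isUnit_of_dvd_one (hdvd (m := (c₀, c₁, c₂)) (s := 0) ?_).2
  ext <;> simp [hc₀, hc₁, hc₂]

lemma exists_rowDet_eq (hind : ZLinIndep α₁ α₂) (h : ConsecutiveBest α₁ α₂ b c)
    (hdet : rowDet a b c ≠ 0) (k : ℤ) : ∃ p, rowDet p b c = k := by
  let I : Ideal ℤ := LinearMap.range (rowDetLinear b c)
  have hunit : IsUnit (Submodule.IsPrincipal.generator I) :=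
    h.isUnit_of_forall_dvd_rowDet hind hdet fun p ↦
      (Submodule.IsPrincipal.mem_iff_generator_dvd I).1 ⟨p, rfl⟩
  have hk : k ∈ I := (Submodule.IsPrincipal.mem_iff_generator_dvd I).2 hunit.dvd
  exact hk

end ConsecutiveBest

end Primitivity

section Rounding

/-- The determinant of the linear forms `zform α₁ α₂` and `x ↦ x.2.1 - x.2.2` at `q` and `r`. It is
the numerator in Cramer's rule for the points with `zform = 0` and equal height coordinates. -/
noncomputable def diagMinor (α₁ α₂ : ℝ) (q r : ℤ × ℤ × ℤ) : ℝ :=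
  zform α₁ α₂ q * (r.2.1 - r.2.2) - zform α₁ α₂ r * (q.2.1 - q.2.2)

lemma exists_real_combination_eq_diagonal (α₁ α₂ : ℝ) (hdet : rowDet p q r ≠ 0) (R : ℝ) :
    ∃ s t u : ℝ, s = R * diagMinor α₁ α₂ q r / rowDet p q r ∧
      s * zform α₁ α₂ p + t * zform α₁ α₂ q + u * zform α₁ α₂ r = 0 ∧
      s * p.2.1 + t * q.2.1 + u * r.2.1 = R ∧ s * p.2.2 + t * q.2.2 + u * r.2.2 = R := by
  have hW : (rowDet p q r : ℝ) ≠ 0 := by exact_mod_cast hdet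
  refine ⟨_, R * diagMinor α₁ α₂ r p / rowDet p q r, R * diagMinor α₁ α₂ p q / rowDet p q r, rfl,
    ?_, ?_, ?_⟩ <;>
  · field_simp
    rw [diagMinor, diagMinor, diagMinor]
    try rw [cast_rowDet α₁ α₂ p q r]
    ring

lemma abs_round_combination_sub_le (s t u x y z : ℝ) :
    |round s * x + round t * y + round u * z - (s * x + t * y + u * z)| ≤
      |s - round s| * |x| + (|y| + |z|) / 2 := by
  have herr (v w : ℝ) : |(v - round v) * w| ≤ 1 / 2 * |w| := by
    rw [abs_mul]
    gcongr
    exact abs_sub_round v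
  calc _ = |-((s - round s) * x) - (t - round t) * y - (u - round u) * z| := by ring_nf
    _ ≤ |-((s - round s) * x)| + |(t - round t) * y| + |(u - round u) * z| :=
      (abs_sub _ _).trans (by gcongr; exact abs_sub _ _)
    _ ≤ _ := by
      rw [abs_neg, abs_mul (s - round s)]
      linarith [herr t y, herr u z]

-- Solve for the real point `zform = 0`, `x.2.1 = x.2.2 = R` in the basis `p, q, r`, and round.
lemma exists_near_diagonal (α₁ α₂ : ℝ) (hdet : rowDet p q r ≠ 0) (R : ℝ) {s : ℝ}
    (hs : s = R * diagMinor α₁ α₂ q r / rowDet p q r) :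
    ∃ n : ℤ × ℤ × ℤ,
      |n.2.1 - R| ≤ |s - round s| * hgt p + (hgt q + hgt r) / 2 ∧
      |n.2.2 - R| ≤ |s - round s| * hgt p + (hgt q + hgt r) / 2 ∧
      |zform α₁ α₂ n| ≤
        |s - round s| * |zform α₁ α₂ p| + (|zform α₁ α₂ q| + |zform α₁ α₂ r|) / 2 := by
  obtain ⟨_, t, u, rfl, hz, h1, h2⟩ := exists_real_combination_eq_diagonal α₁ α₂ hdet R
  rw [← hs] at hz h1 h2
  refine ⟨round s • p + round t • q + round u • r, ?_, ?_, ?_⟩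
  · have := abs_round_combination_sub_le s t u p.2.1 q.2.1 r.2.1
    rw [h1] at this
    simp only [Prod.fst_add, Prod.snd_add, Prod.smul_fst, Prod.smul_snd, smul_eq_mul, Int.cast_add,
      Int.cast_mul]
    refine this.trans ?_
    gcongr <;> exact abs_fst_le_hgt _
  · have := abs_round_combination_sub_le s t u p.2.2 q.2.2 r.2.2
    rw [h2] at this
    simp only [Prod.snd_add, Prod.smul_snd, smul_eq_mul, Int.cast_add,
      Int.cast_mul]
    refine this.trans ?_
    gcongr <;> exact abs_snd_le_hgt _
  · have := abs_round_combination_sub_le s t u (zform α₁ α₂ p) (zform α₁ α₂ q) (zform α₁ α₂ r)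
    rw [hz, sub_zero] at this
    simpa only [zform_add, zform_zsmul] using this

end Rounding

section Witness

/-- Alternative (ii) in scale-invariant form, for `B = M_ν` and `C = M_{ν+1}`: with heights measured
in units of `B`, the bounds depend on `C / B` only. The two height coordinates of `n` are only
required to have the same sign, since `n` may be replaced by `-n`. -/
structure IsWitness (α₁ α₂ B C : ℝ) (n : ℤ × ℤ × ℤ) : Prop where
  coord_mul_pos : 0 < n.2.1 * n.2.2
  hgt_le : hgt n ≤ 240 * (B * (C / B) ^ tau)
  abs_zform_le : |zform α₁ α₂ n| * B ^ 2 * (hgt n / B) ^ tau ≤ 24 ^ tau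

variable {B C σ : ℝ}

lemma IsWitness.of_hgt_le (hB : 0 < B) (hpos : 0 < n.2.1 * n.2.2) (hn : hgt n ≤ σ * B)
    (hσ : σ ≤ 240 * (C / B) ^ tau)
    (hz : |zform α₁ α₂ n| * B ^ 2 * σ ^ tau ≤ 24 ^ tau) : IsWitness α₁ α₂ B C n where
  coord_mul_pos := hpos
  hgt_le := hn.trans (by nlinarith)
  abs_zform_le := by
    have h0 : (0 : ℝ) ≤ hgt n := by exact_mod_cast hgt_nonneg n
    refine le_trans ?_ hz
    gcongr
    · exact tau_pos.le
    · exact (div_le_iff₀ hB).2 hn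

lemma exists_pos_of_coord_mul_pos (h : 0 < n.2.1 * n.2.2) :
    ∃ x : ℤ × ℤ, 0 < x.1 ∧ 0 < x.2 ∧ max x.1 x.2 = hgt n ∧
      nint (α₁ * x.1 + α₂ * x.2) ≤ |zform α₁ α₂ n| := by
  rcases mul_pos_iff.1 h with ⟨h1, h2⟩ | ⟨h1, h2⟩
  · exact ⟨n.2, h1, h2, by rw [hgt, abs_of_pos h1, abs_of_pos h2], nint_le_abs_zform n⟩
  · refine ⟨(-n).2, neg_pos.2 h1, neg_pos.2 h2, by rw [hgt, abs_of_neg h1, abs_of_neg h2]; rfl, ?_⟩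
    simpa only [zform_neg, abs_neg] using nint_le_abs_zform (α₁ := α₁) (α₂ := α₂) (-n)

lemma IsWitness.exists_pos_point (hB : 0 < B) (hC : 0 < C) (h : IsWitness α₁ α₂ B C n) :
    ∃ x : ℤ × ℤ, 0 < x.1 ∧ 0 < x.2 ∧
      ((max x.1 x.2 : ℤ) : ℝ) ≤ 240 * C ^ tau * B ^ (-(1 / tau)) ∧
      nint (α₁ * x.1 + α₂ * x.2) ≤
        24 ^ tau * B ^ ((1 - tau) / tau) * ((max x.1 x.2 : ℤ) : ℝ) ^ (-tau) := by
  obtain ⟨x, h1, h2, hx, hz⟩ := exists_pos_of_coord_mul_pos (α₁ := α₁) (α₂ := α₂) h.coord_mul_pos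
  have hn : (0 : ℝ) < hgt n := by
    rw [← hx]
    exact_mod_cast lt_max_of_lt_left h1
  refine ⟨x, h1, h2, ?_, hz.trans ?_⟩
  · have hscale : B * (C / B) ^ tau = C ^ tau * B ^ (-(1 / tau)) := by
      rw [one_div_tau, neg_sub, Real.rpow_sub hB, Real.rpow_one, Real.div_rpow hC.le hB.le]
      field_simp
    rw [hx, mul_assoc, ← hscale]
    exact h.hgt_le
  · have hscale : (24 : ℝ) ^ tau * B ^ ((1 - tau) / tau) * (hgt n : ℝ) ^ (-tau) =
        24 ^ tau / (B ^ 2 * (hgt n / B) ^ tau) := by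
      rw [one_sub_tau_div_tau, Real.rpow_sub hB, Real.rpow_neg hn.le, Real.div_rpow hn.le hB.le,
        Real.rpow_two]
      field_simp
    rw [hx, hscale, le_div_iff₀ (by positivity), ← mul_assoc]
    exact h.abs_zform_le

end Witness

section BoundedRatio

namespace ConsecutiveBest

lemma one_lt_hgt_div_hgt (h : ConsecutiveBest α₁ α₂ b c) : (1 : ℝ) < hgt c / hgt b :=
  (one_lt_div h.hgt_left_pos).2 h.hgt_lt

lemma isWitness_of_hgt_le (h : ConsecutiveBest α₁ α₂ b c) (hpos : 0 < n.2.1 * n.2.2)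
    (hn : hgt n ≤ hgt c) (hz : |zform α₁ α₂ n| ≤ |zform α₁ α₂ b|) :
    IsWitness α₁ α₂ (hgt b) (hgt c) n := by
  have hB := h.hgt_left_pos
  have hρ := h.one_lt_hgt_div_hgt
  refine .of_hgt_le hB hpos (σ := hgt c / hgt b) ?_ ?_ ?_
  · rw [div_mul_cancel₀ _ hB.ne']
    exact_mod_cast hn
  · linarith [le_rpow_tau hρ.le]
  · calc |zform α₁ α₂ n| * hgt b ^ 2 * (hgt c / hgt b) ^ tau
      _ ≤ |zform α₁ α₂ b| * hgt b ^ 2 * (hgt c / hgt b) ^ (2 : ℝ) := by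
        gcongr
        · exact hρ.le
        · exact tau_lt_two.le
      _ = |zform α₁ α₂ b| * hgt c ^ 2 := by
        rw [Real.rpow_two]
        field_simp
      _ ≤ 24 := by linarith [h.abs_zform_mul_hgt_sq_le]
      _ ≤ 24 ^ tau := le_rpow_tau (by norm_num)

lemma exists_coord_mul_pos_and_abs_zform_le (hab : ConsecutiveBest α₁ α₂ a b)
    (hbc : ConsecutiveBest α₁ α₂ b c) (hdet : rowDet a b c ≠ 0) :
    ∃ n, 0 < n.2.1 * n.2.2 ∧ (hgt n : ℝ) ≤ 3 * hgt c ∧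
      |zform α₁ α₂ n| ≤ 3 / 2 * |zform α₁ α₂ a| := by
  obtain ⟨n, h1, h2, hz⟩ := exists_near_diagonal α₁ α₂ hdet (3 / 2 * hgt c) rfl
  have hround (y : ℝ) {x : ℝ} (hx : 0 ≤ x) : |y - round y| * x ≤ 1 / 2 * x :=
    mul_le_mul_of_nonneg_right (abs_sub_round y) hx
  replace h1 := abs_le.1 (h1.trans (add_le_add_left (hround _ hab.hgt_left_pos.le) _))
  replace h2 := abs_le.1 (h2.trans (add_le_add_left (hround _ hab.hgt_left_pos.le) _))
  replace hz := hz.trans (add_le_add_left (hround _ (abs_nonneg _)) _)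
  have hAB := hab.hgt_lt
  have hBC := hbc.hgt_lt
  have hn1 : (0 : ℝ) < n.2.1 := by linarith
  have hn2 : (0 : ℝ) < n.2.2 := by linarith
  refine ⟨n, by exact_mod_cast mul_pos hn1 hn2, ?_, ?_⟩
  · rw [cast_hgt, abs_of_pos hn1, abs_of_pos hn2]
    apply max_le <;> linarith
  · have hb := hab.abs_zform_right_le
    have hc := hbc.abs_zform_right_le
    linarith

lemma exists_isWitness_of_hgt_le_four_mul (hab : ConsecutiveBest α₁ α₂ a b)
    (hbc : ConsecutiveBest α₁ α₂ b c) (hdet : rowDet a b c ≠ 0)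
    (hle : (hgt c : ℝ) ≤ 4 * hgt b) : ∃ n, IsWitness α₁ α₂ (hgt b) (hgt c) n := by
  have hB := hbc.hgt_left_pos
  have hρ := hbc.one_lt_hgt_div_hgt
  obtain ⟨n, hpos, hn, hz⟩ := hab.exists_coord_mul_pos_and_abs_zform_le hbc hdet
  refine ⟨n, .of_hgt_le hB hpos (σ := 3 * (hgt c / hgt b)) ?_ ?_ ?_⟩
  · rwa [mul_assoc, div_mul_cancel₀ _ hB.ne']
  · linarith [le_rpow_tau hρ.le]
  · have hσ : (3 * (hgt c / hgt b) : ℝ) ≤ 12 := by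
      rw [← mul_div_assoc, div_le_iff₀ hB]
      linarith
    calc |zform α₁ α₂ n| * hgt b ^ 2 * (3 * (hgt c / hgt b)) ^ tau
      _ ≤ 3 / 2 * |zform α₁ α₂ a| * hgt b ^ 2 * 12 ^ tau := by
        gcongr
        exact tau_pos.le
      _ ≤ 2 * 12 ^ tau := by
        gcongr
        linarith [hab.abs_zform_mul_hgt_sq_le]
      _ ≤ 2 ^ tau * 12 ^ tau := by
        gcongr
        exact le_rpow_tau one_le_two
      _ = 24 ^ tau := by
        rw [← Real.mul_rpow] <;> norm_num

end ConsecutiveBest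

end BoundedRatio

section SmallForm

lemma one_le_of_rowDet_ne_zero (α₁ α₂ : ℝ) (hdet : rowDet p q r ≠ 0) :
    1 ≤ |zform α₁ α₂ p| * |(q.2.1 * r.2.2 - q.2.2 * r.2.1 : ℤ)| +
      2 * hgt p * (hgt r * |zform α₁ α₂ q| + hgt q * |zform α₁ α₂ r|) := by
  have hW : (1 : ℝ) ≤ |(rowDet p q r : ℝ)| := by exact_mod_cast Int.one_le_abs hdet
  have hp : (0 : ℝ) ≤ hgt p := by exact_mod_cast hgt_nonneg p
  have hmul {x y z v w : ℝ} (hx : |x| ≤ hgt p) (hy : |y| ≤ hgt q) (hz : |z| ≤ hgt r) :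
      |x * (y * v - w * z)| ≤ hgt p * (hgt r * |w| + hgt q * |v|) := by
    have := abs_sub (y * v) (w * z)
    rw [abs_mul y, abs_mul w] at this
    rw [abs_mul]
    gcongr
    nlinarith [abs_nonneg v, abs_nonneg w]
  rw [cast_rowDet α₁ α₂] at hW
  have h3 := abs_add_three (zform α₁ α₂ p * (q.2.1 * r.2.2 - q.2.2 * r.2.1))
    (p.2.1 * (q.2.2 * zform α₁ α₂ r - zform α₁ α₂ q * r.2.2))
    (p.2.2 * (zform α₁ α₂ q * r.2.1 - q.2.1 * zform α₁ α₂ r))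
  have h1 := hmul (v := zform α₁ α₂ r) (w := zform α₁ α₂ q) (abs_fst_le_hgt p) (abs_snd_le_hgt q)
    (abs_snd_le_hgt r)
  have h2 := hmul (v := zform α₁ α₂ r) (w := zform α₁ α₂ q) (abs_snd_le_hgt p) (abs_fst_le_hgt q)
    (abs_fst_le_hgt r)
  rw [abs_mul (zform α₁ α₂ p)] at h3
  rw [← abs_neg, ← mul_neg, neg_sub] at h2
  push_cast
  linarith

lemma exists_mul_sub_mul_sub_neg_of_lt {u₁ u₂ v₁ v₂ : ℤ} (hu₁ : 0 ≤ u₁) (hu₂ : 0 ≤ u₂)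
    (hv₁ : 0 ≤ v₁) (h : u₁ * u₂ < u₁ * v₂ - u₂ * v₁) :
    ∃ k, 0 ≤ k ∧ (v₁ - k * u₁) * (v₂ - k * u₂) < 0 ∧ k * u₁ ≤ v₁ + u₁ ∧ k * u₂ ≤ v₂ + u₂ := by
  have hu₁ : 0 < u₁ := by
    refine hu₁.lt_of_ne' ?_
    rintro rfl
    nlinarith
  refine ⟨v₁ / u₁ + 1, by positivity, ?_⟩
  have hlt : v₁ < (v₁ / u₁ + 1) * u₁ := Int.lt_mul_of_ediv_lt hu₁ (lt_add_one _)
  have hle : (v₁ / u₁ + 1) * u₁ ≤ v₁ + u₁ := by linarith [Int.ediv_mul_le v₁ hu₁.ne']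
  have hlt₂ : (v₁ / u₁ + 1) * u₂ < v₂ := by
    refine lt_of_mul_lt_mul_left ?_ hu₁.le
    nlinarith
  exact ⟨mul_neg_of_neg_of_pos (by linarith) (by linarith), hle, by linarith⟩

lemma exists_mul_sub_mul_sub_neg {u₁ u₂ v₁ v₂ : ℤ} (hu₁ : 0 ≤ u₁) (hu₂ : 0 ≤ u₂)
    (hv₁ : 0 ≤ v₁) (hv₂ : 0 ≤ v₂) (h : u₁ * u₂ < |u₁ * v₂ - u₂ * v₁|) :
    ∃ k, 0 ≤ k ∧ (v₁ - k * u₁) * (v₂ - k * u₂) < 0 ∧ k * u₁ ≤ v₁ + u₁ ∧ k * u₂ ≤ v₂ + u₂ := by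
  rcases lt_abs.1 h with h | h
  · exact exists_mul_sub_mul_sub_neg_of_lt hu₁ hu₂ hv₁ h
  · obtain ⟨k, hk, hneg, h2, h1⟩ :=
      exists_mul_sub_mul_sub_neg_of_lt hu₂ hu₁ hv₂ (by rwa [neg_sub, mul_comm u₁ u₂] at h)
    exact ⟨k, hk, by rwa [mul_comm], h1, h2⟩

lemma hgt_eq_max (h₁ : 0 ≤ n.2.1) (h₂ : n.2.2 ≤ 0) : hgt n = max n.2.1 (-n.2.2) := by
  rw [hgt, abs_of_nonneg h₁, abs_of_nonpos h₂]

lemma exists_four_zsmul_sub_zsmul (hb₁ : 0 ≤ b.2.1) (hb₂ : b.2.2 ≤ 0) (hc₁ : 0 ≤ c.2.1)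
    (hc₂ : c.2.2 ≤ 0) (hbc : hgt b ≤ hgt c)
    (hlt : hgt b ^ 2 < 4 * |b.2.1 * c.2.2 - b.2.2 * c.2.1|) :
    ∃ k : ℤ, 0 ≤ k ∧ k * hgt b ≤ 4 * hgt c + hgt b ∧
      0 < ((4 : ℤ) • c - k • b).2.1 * ((4 : ℤ) • c - k • b).2.2 ∧
      hgt ((4 : ℤ) • c - k • b) ≤ 4 * hgt c := by
  have hB := hgt_eq_max hb₁ hb₂
  obtain ⟨hb1, hb2⟩ := max_le_iff.1 hB.ge
  obtain ⟨hc1, hc2⟩ := max_le_iff.1 (hgt_eq_max hc₁ hc₂).ge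
  have hminor : b.2.1 * (-b.2.2) < |b.2.1 * (4 * -c.2.2) - -b.2.2 * (4 * c.2.1)| :=
    calc b.2.1 * (-b.2.2) ≤ hgt b ^ 2 := by nlinarith
      _ < |-4 * (b.2.1 * c.2.2 - b.2.2 * c.2.1)| := by rwa [abs_mul]
      _ = _ := by ring_nf
  obtain ⟨k, hk, hneg, h1, h2⟩ := exists_mul_sub_mul_sub_neg hb₁ (neg_nonneg.2 hb₂)
    (mul_nonneg zero_le_four hc₁) (mul_nonneg zero_le_four (neg_nonneg.2 hc₂)) hminor
  have hk1 : 0 ≤ k * b.2.1 := mul_nonneg hk hb₁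
  have hk2 : 0 ≤ k * -b.2.2 := mul_nonneg hk (neg_nonneg.2 hb₂)
  refine ⟨k, hk, ?_, ?_, max_le (abs_le.2 ?_) (abs_le.2 ?_)⟩
  · rw [hB, mul_max_of_nonneg _ _ hk, ← hB]
    apply max_le <;> linarith
  all_goals simp only [Prod.fst_sub, Prod.snd_sub, Prod.smul_fst, Prod.smul_snd, smul_eq_mul]
  · linarith
  · constructor <;> linarith
  · constructor <;> linarith

namespace ConsecutiveBest

lemma hgt_sq_lt_four_mul_abs_minor (hab : ConsecutiveBest α₁ α₂ a b)
    (hbc : ConsecutiveBest α₁ α₂ b c) (hdet : rowDet a b c ≠ 0)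
    (hle : 4 * (hgt b : ℝ) ≤ hgt c) (hz : |zform α₁ α₂ b| * hgt c ^ 2 ≤ 1) :
    hgt b ^ 2 < 4 * |b.2.1 * c.2.2 - b.2.2 * c.2.1| := by
  have hB := hbc.hgt_left_pos
  have hAB := hab.hgt_lt
  have hC := hB.trans hbc.hgt_lt
  have hone := one_le_of_rowDet_ne_zero α₁ α₂ hdet
  have hc := hbc.abs_zform_right_le
  have hsmall : 2 * hgt a * (hgt c * |zform α₁ α₂ b| + hgt b * |zform α₁ α₂ c|) ≤ 5 / 8 :=
    calc 2 * hgt a * (hgt c * |zform α₁ α₂ b| + hgt b * |zform α₁ α₂ c|)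
      _ ≤ 2 * (hgt c / 4) * (hgt c * |zform α₁ α₂ b| + hgt c / 4 * |zform α₁ α₂ b|) := by
        gcongr <;> linarith
      _ = 5 / 8 * (|zform α₁ α₂ b| * hgt c ^ 2) := by ring
      _ ≤ 5 / 8 := by linarith
  have ha := hab.abs_zform_mul_hgt_sq_le
  rify at hone ⊢
  set Δ := |(b.2.1 * c.2.2 - b.2.2 * c.2.1 : ℝ)|
  have hΔ : 0 < Δ := by
    by_contra! h0
    nlinarith [abs_nonneg (zform α₁ α₂ a)]
  have hBΔ : 3 / 8 * (hgt b : ℝ) ^ 2 ≤ 4 / 3 * Δ :=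
    calc 3 / 8 * (hgt b : ℝ) ^ 2 ≤ |zform α₁ α₂ a| * Δ * hgt b ^ 2 := by
          gcongr
          linarith
      _ = |zform α₁ α₂ a| * hgt b ^ 2 * Δ := by ring
      _ ≤ 4 / 3 * Δ := by gcongr
  linarith

lemma abs_zform_four_zsmul_sub_zsmul_mul_le (h : ConsecutiveBest α₁ α₂ b c)
    (hle : 4 * (hgt b : ℝ) ≤ hgt c) {k : ℤ} (hk : 0 ≤ k)
    (hkB : k * hgt b ≤ 4 * hgt c + hgt b) :
    |zform α₁ α₂ ((4 : ℤ) • c - k • b)| * hgt b ≤ 6 * |zform α₁ α₂ b| * hgt c := by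
  have hB := h.hgt_left_pos
  have hc := h.abs_zform_right_le
  rify at hk hkB
  calc |zform α₁ α₂ ((4 : ℤ) • c - k • b)| * hgt b
    _ ≤ (4 * |zform α₁ α₂ c| + k * |zform α₁ α₂ b|) * hgt b := by
      gcongr
      rw [zform_sub, zform_zsmul, zform_zsmul]
      simpa [abs_mul, abs_of_nonneg hk] using
        abs_sub (4 * zform α₁ α₂ c) (k * zform α₁ α₂ b)
    _ ≤ (4 * |zform α₁ α₂ b| + k * |zform α₁ α₂ b|) * hgt b := by gcongr
    _ = |zform α₁ α₂ b| * (4 * hgt b + k * hgt b) := by ring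
    _ ≤ |zform α₁ α₂ b| * (6 * hgt c) := by
      gcongr
      linarith
    _ = 6 * |zform α₁ α₂ b| * hgt c := by ring

lemma exists_isWitness_of_mul_rpow_le_one (hab : ConsecutiveBest α₁ α₂ a b)
    (hbc : ConsecutiveBest α₁ α₂ b c) (hdet : rowDet a b c ≠ 0)
    (hb₁ : 0 ≤ b.2.1) (hb₂ : b.2.2 ≤ 0) (hc₁ : 0 ≤ c.2.1) (hc₂ : c.2.2 ≤ 0)
    (hle : 4 * (hgt b : ℝ) ≤ hgt c)
    (hz : |zform α₁ α₂ b| * hgt b * hgt c * (hgt c / hgt b) ^ tau ≤ 1) :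
    ∃ n, IsWitness α₁ α₂ (hgt b) (hgt c) n := by
  have hB := hbc.hgt_left_pos
  have hC := hB.trans hbc.hgt_lt
  have hρ := le_rpow_tau hbc.one_lt_hgt_div_hgt.le
  have hz' : |zform α₁ α₂ b| * hgt c ^ 2 ≤ 1 := by
    refine le_trans ?_ hz
    calc |zform α₁ α₂ b| * hgt c ^ 2
      _ = |zform α₁ α₂ b| * hgt b * hgt c * (hgt c / hgt b) := by field_simp
      _ ≤ _ := by gcongr
  obtain ⟨k, hk, hkB, hpos, hn⟩ := exists_four_zsmul_sub_zsmul hb₁ hb₂ hc₁ hc₂ hbc.2.2.1.le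
    (hab.hgt_sq_lt_four_mul_abs_minor hbc hdet hle hz')
  rify at hn
  have hzn := hbc.abs_zform_four_zsmul_sub_zsmul_mul_le hle hk hkB
  refine ⟨_, .of_hgt_le hB hpos (σ := 4 * (hgt c / hgt b)) ?_ ?_ ?_⟩
  · rwa [mul_assoc, div_mul_cancel₀ _ hB.ne']
  · linarith [hbc.one_lt_hgt_div_hgt]
  · calc |zform α₁ α₂ ((4 : ℤ) • c - k • b)| * hgt b ^ 2 * (4 * (hgt c / hgt b)) ^ tau
      _ = |zform α₁ α₂ ((4 : ℤ) • c - k • b)| * hgt b * hgt b *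
          (4 ^ tau * (hgt c / hgt b) ^ tau) := by
        rw [Real.mul_rpow zero_le_four (by positivity)]
        ring
      _ ≤ 6 * |zform α₁ α₂ b| * hgt c * hgt b * (4 ^ tau * (hgt c / hgt b) ^ tau) := by gcongr
      _ = 6 * 4 ^ tau * (|zform α₁ α₂ b| * hgt b * hgt c * (hgt c / hgt b) ^ tau) := by ring
      _ ≤ 6 ^ tau * 4 ^ tau * 1 := by
        gcongr
        exact le_rpow_tau (by norm_num)
      _ = 24 ^ tau := by
        rw [mul_one, ← Real.mul_rpow] <;> norm_num

end ConsecutiveBest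

end SmallForm

section LargeForm

lemma hgt_le_fst_sub_snd (h₁ : 0 ≤ n.2.1) (h₂ : n.2.2 ≤ 0) : hgt n ≤ n.2.1 - n.2.2 := by
  rw [hgt_eq_max h₁ h₂]
  omega

lemma hgt_sub_le_max (hb₁ : 0 ≤ b.2.1) (hb₂ : b.2.2 ≤ 0) (hc₁ : 0 ≤ c.2.1) (hc₂ : c.2.2 ≤ 0) :
    hgt (c - b) ≤ max (hgt b) (hgt c) := by
  rw [hgt_eq_max hb₁ hb₂, hgt_eq_max hc₁ hc₂]
  refine max_le (abs_le.2 ?_) (abs_le.2 ?_) <;>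
    simp only [Prod.fst_sub, Prod.snd_sub] <;> omega

lemma abs_mul_hgt_le_abs_diagMinor_of_mul_nonpos (hb₁ : 0 ≤ b.2.1) (hb₂ : b.2.2 ≤ 0)
    (hc₁ : 0 ≤ c.2.1) (hc₂ : c.2.2 ≤ 0) (hz : zform α₁ α₂ b * zform α₁ α₂ c ≤ 0) :
    |zform α₁ α₂ b| * hgt c ≤ |diagMinor α₁ α₂ b c| := by
  have hC : (hgt c : ℝ) ≤ c.2.1 - c.2.2 := by exact_mod_cast hgt_le_fst_sub_snd hc₁ hc₂
  have hX : (0 : ℝ) ≤ c.2.1 - c.2.2 := by exact_mod_cast (by omega : 0 ≤ c.2.1 - c.2.2)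
  have hY : (0 : ℝ) ≤ b.2.1 - b.2.2 := by exact_mod_cast (by omega : 0 ≤ b.2.1 - b.2.2)
  calc |zform α₁ α₂ b| * hgt c ≤ |zform α₁ α₂ b * (c.2.1 - c.2.2)| := by
        rw [abs_mul, abs_of_nonneg hX]
        gcongr
    _ ≤ |diagMinor α₁ α₂ b c| := by
        rw [← sq_le_sq, diagMinor]
        nlinarith [mul_nonneg hX hY, sq_nonneg (zform α₁ α₂ c * (b.2.1 - b.2.2))]

lemma abs_mul_hgt_le_abs_diagMinor_of_add_le (hb₁ : 0 ≤ b.2.1) (hb₂ : b.2.2 ≤ 0)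
    (hz : |zform α₁ α₂ c| ≤ |zform α₁ α₂ b|)
    (hle : hgt c + (b.2.1 - b.2.2) ≤ c.2.1 - c.2.2) :
    |zform α₁ α₂ b| * hgt c ≤ |diagMinor α₁ α₂ b c| := by
  have hY : (0 : ℝ) ≤ b.2.1 - b.2.2 := by exact_mod_cast (by omega : 0 ≤ b.2.1 - b.2.2)
  rify at hle
  calc |zform α₁ α₂ b| * hgt c
    _ ≤ |zform α₁ α₂ b| * (c.2.1 - c.2.2) - |zform α₁ α₂ b| * (b.2.1 - b.2.2) := by
      rw [← mul_sub]
      gcongr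
      linarith
    _ ≤ |zform α₁ α₂ b| * |(c.2.1 - c.2.2 : ℝ)| - |zform α₁ α₂ c| * |(b.2.1 - b.2.2 : ℝ)| := by
      rw [abs_of_nonneg hY]
      gcongr
      exact le_abs_self _
    _ ≤ |diagMinor α₁ α₂ b c| := by
      rw [← abs_mul, ← abs_mul]
      exact abs_sub_abs_le_abs_sub _ _

lemma hgt_add_le_of_le_hgt_sub (hb₁ : 0 ≤ b.2.1) (hb₂ : b.2.2 ≤ 0) (hc₁ : 0 ≤ c.2.1)
    (hc₂ : c.2.2 ≤ 0) (hbc : hgt b < hgt c) (hle : hgt c ≤ hgt (c - b))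
    (hneg : (c - b).2.1 * (c - b).2.2 ≤ 0) : hgt c + (b.2.1 - b.2.2) ≤ c.2.1 - c.2.2 := by
  obtain ⟨hb1, hb2⟩ := max_le_iff.1 (hgt_eq_max hb₁ hb₂).ge
  replace hle : hgt c ≤ max |c.2.1 - b.2.1| |c.2.2 - b.2.2| := hle
  rw [le_max_iff, le_abs, le_abs] at hle
  simp only [Prod.fst_sub, Prod.snd_sub] at hneg
  rcases mul_nonpos_iff.1 hneg with ⟨h1, h2⟩ | ⟨h1, h2⟩ <;> omega

namespace ConsecutiveBest

lemma isWitness_sub_or_abs_mul_hgt_le_abs_diagMinor (hind : ZLinIndep α₁ α₂)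
    (h : ConsecutiveBest α₁ α₂ b c) (hb₁ : 0 ≤ b.2.1) (hb₂ : b.2.2 ≤ 0) (hc₁ : 0 ≤ c.2.1)
    (hc₂ : c.2.2 ≤ 0) : IsWitness α₁ α₂ (hgt b) (hgt c) (c - b) ∨
      |zform α₁ α₂ b| * hgt c ≤ |diagMinor α₁ α₂ b c| := by
  rcases le_or_gt (zform α₁ α₂ b * zform α₁ α₂ c) 0 with hz | hz
  · exact .inr (abs_mul_hgt_le_abs_diagMinor_of_mul_nonpos hb₁ hb₂ hc₁ hc₂ hz)
  have hcb := h.abs_zform_lt hind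
  have hsub : |zform α₁ α₂ (c - b)| < |zform α₁ α₂ b| := by
    rw [zform_sub]
    rw [← sq_lt_sq] at hcb ⊢
    nlinarith
  have hpos : 0 < hgt (c - b) := by
    refine hgt_pos_iff.2 fun h0 ↦ h.2.2.1.ne ?_
    rw [hgt, hgt, sub_eq_zero.1 (show c.2 - b.2 = 0 from h0)]
  have hge : hgt c ≤ hgt (c - b) := not_lt.1 fun hlt ↦ (h.abs_zform_le hpos hlt).not_gt hsub
  rcases lt_or_ge 0 ((c - b).2.1 * (c - b).2.2) with hsign | hsign
  · refine .inl (h.isWitness_of_hgt_le hsign ?_ hsub.le)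
    exact (hgt_sub_le_max hb₁ hb₂ hc₁ hc₂).trans (max_le h.2.2.1.le le_rfl)
  · exact .inr (abs_mul_hgt_le_abs_diagMinor_of_add_le hb₁ hb₂ hcb.le
      (hgt_add_le_of_le_hgt_sub hb₁ hb₂ hc₁ hc₂ h.2.2.1 hge hsign))

lemma exists_coord_mul_pos_and_hgt_mul_le (hind : ZLinIndep α₁ α₂)
    (h : ConsecutiveBest α₁ α₂ b c) (hdet : rowDet a b c ≠ 0)
    (hG : |zform α₁ α₂ b| * hgt c ≤ |diagMinor α₁ α₂ b c|) :
    ∃ n, 0 < n.2.1 * n.2.2 ∧ hgt n ≤ 4 / (|zform α₁ α₂ b| * hgt c) ∧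
      |zform α₁ α₂ n| ≤ |zform α₁ α₂ b| := by
  have hB := h.hgt_left_pos
  have hBC := h.hgt_lt
  have hC := hB.trans hBC
  have hy : 0 < |zform α₁ α₂ b| * hgt c := mul_pos (h.abs_zform_left_pos hind) hC
  set y := |zform α₁ α₂ b| * hgt c
  set G := diagMinor α₁ α₂ b c
  have hG0 : 0 < |G| := hy.trans_le hG
  obtain ⟨k, hk, hkG⟩ : ∃ k : ℤ, k ≠ 0 ∧ G / k = |G| := by
    rcases abs_choice G with h | h <;> rw [h]
    exacts [⟨1, by simp⟩, ⟨-1, by simp [div_neg]⟩]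
  obtain ⟨v, hv⟩ := h.exists_rowDet_eq hind hdet k
  -- The coefficient of `v` in Cramer's rule is made an integer, so that rounding does not move it.
  set m := ⌈hgt c * |G|⌉
  have hm : (m : ℝ) = m / |G| * G / rowDet v b c := by
    rw [hv, mul_div_assoc, hkG, div_mul_cancel₀ _ hG0.ne']
  obtain ⟨n, h1, h2, hz⟩ := exists_near_diagonal α₁ α₂ (hv.trans_ne hk) (m / |G|) hm
  simp only [round_intCast, sub_self, abs_zero, zero_mul, zero_add] at h1 h2 hz
  rw [abs_le] at h1 h2
  have hRC : (hgt c : ℝ) ≤ m / |G| := (le_div_iff₀ hG0).2 (Int.le_ceil _)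
  have hRy : m / |G| ≤ hgt c + 1 / y := by
    calc m / |G| ≤ (hgt c * |G| + 1) / |G| := by
          gcongr
          exact (Int.ceil_lt_add_one _).le
      _ = hgt c + 1 / |G| := by field_simp
      _ ≤ hgt c + 1 / y := by gcongr
  have hCy : (hgt c : ℝ) ≤ 4 / 3 * (1 / y) := by
    rw [mul_one_div, le_div_iff₀ hy]
    linarith [h.abs_zform_mul_hgt_sq_le]
  have hn1 : (0 : ℝ) < n.2.1 := by linarith
  have hn2 : (0 : ℝ) < n.2.2 := by linarith
  refine ⟨n, by exact_mod_cast mul_pos hn1 hn2, ?_, ?_⟩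
  · rw [cast_hgt, abs_of_pos hn1, abs_of_pos hn2, ← mul_one_div]
    apply max_le <;> linarith
  · linarith [h.abs_zform_lt hind]

lemma exists_isWitness_of_one_le_mul_rpow (hind : ZLinIndep α₁ α₂)
    (h : ConsecutiveBest α₁ α₂ b c) (hdet : rowDet a b c ≠ 0)
    (hz : 1 ≤ |zform α₁ α₂ b| * hgt b * hgt c * (hgt c / hgt b) ^ tau)
    (hG : |zform α₁ α₂ b| * hgt c ≤ |diagMinor α₁ α₂ b c|) :
    ∃ n, IsWitness α₁ α₂ (hgt b) (hgt c) n := by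
  obtain ⟨n, hpos, hn, hzn⟩ := h.exists_coord_mul_pos_and_hgt_mul_le hind hdet hG
  have hB := h.hgt_left_pos
  have hC := hB.trans h.hgt_lt
  have hb := h.abs_zform_left_pos hind
  set ρ : ℝ := hgt c / hgt b
  have hρ : 0 < ρ := div_pos hC hB
  set Y := (|zform α₁ α₂ b| * hgt b * hgt c)⁻¹
  have hY : 0 < Y := by positivity
  have hYρ : Y ≤ ρ ^ tau := by rwa [inv_le_iff_one_le_mul₀' (by positivity)]
  refine ⟨n, .of_hgt_le hB hpos (σ := 4 * Y) ?_ (by linarith) ?_⟩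
  · refine hn.trans_eq ?_
    simp only [Y]
    field_simp
  -- The golden ratio enters here: `τ * (τ - 1) = 1`.
  · have hYρ' : Y ^ (tau - 1) ≤ ρ :=
      calc Y ^ (tau - 1) ≤ (ρ ^ tau) ^ (tau - 1) := by
            gcongr
            linarith [one_lt_tau]
        _ = ρ := by
            rw [← Real.rpow_mul hρ.le, mul_sub, ← sq, tau_sq, mul_one, add_sub_cancel_left,
              Real.rpow_one]
    calc |zform α₁ α₂ n| * hgt b ^ 2 * (4 * Y) ^ tau
      _ ≤ |zform α₁ α₂ b| * hgt b ^ 2 * (4 * Y) ^ tau := by gcongr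
      _ = |zform α₁ α₂ b| * hgt b ^ 2 * Y * Y ^ (tau - 1) * 4 ^ tau := by
        rw [Real.mul_rpow zero_le_four hY.le, Real.rpow_sub_one hY.ne']
        field_simp
      _ ≤ |zform α₁ α₂ b| * hgt b ^ 2 * Y * ρ * 4 ^ tau := by gcongr
      _ = 4 ^ tau := by
        simp only [Y, ρ]
        field_simp
      _ ≤ 24 ^ tau := by
        gcongr
        · exact tau_pos.le
        · norm_num

end ConsecutiveBest

end LargeForm

namespace ConsecutiveBest

lemma exists_isWitness_of_quadrant (hind : ZLinIndep α₁ α₂) (hab : ConsecutiveBest α₁ α₂ a b)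
    (hbc : ConsecutiveBest α₁ α₂ b c) (hdet : rowDet a b c ≠ 0)
    (hb₁ : 0 ≤ b.2.1) (hb₂ : b.2.2 ≤ 0) (hc₁ : 0 ≤ c.2.1) (hc₂ : c.2.2 ≤ 0) :
    ∃ n, IsWitness α₁ α₂ (hgt b) (hgt c) n := by
  rcases le_total (hgt c : ℝ) (4 * hgt b) with hle | hle
  · exact hab.exists_isWitness_of_hgt_le_four_mul hbc hdet hle
  rcases le_total (|zform α₁ α₂ b| * hgt b * hgt c * (hgt c / hgt b) ^ tau) 1 with hz | hz
  · exact hab.exists_isWitness_of_mul_rpow_le_one hbc hdet hb₁ hb₂ hc₁ hc₂ hle hz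
  rcases hbc.isWitness_sub_or_abs_mul_hgt_le_abs_diagMinor hind hb₁ hb₂ hc₁ hc₂ with hn | hG
  · exact ⟨c - b, hn⟩
  · exact hbc.exists_isWitness_of_one_le_mul_rpow hind hdet hz hG

lemma exists_isWitness (hind : ZLinIndep α₁ α₂) (hab : ConsecutiveBest α₁ α₂ a b)
    (hbc : ConsecutiveBest α₁ α₂ b c) (hdet : rowDet a b c ≠ 0) :
    ∃ n, IsWitness α₁ α₂ (hgt b) (hgt c) n := by
  rcases lt_or_ge 0 (b.2.1 * b.2.2) with hb | hb
  · exact ⟨b, hbc.isWitness_of_hgt_le hb hbc.2.2.1.le le_rfl⟩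
  rcases lt_or_ge 0 (c.2.1 * c.2.2) with hc | hc
  · exact ⟨c, hbc.isWitness_of_hgt_le hc le_rfl (hbc.abs_zform_lt hind).le⟩
  wlog hbq : 0 ≤ b.2.1 ∧ b.2.2 ≤ 0 generalizing b
  · have hbq' := (mul_nonpos_iff.1 hb).resolve_left hbq
    simpa using this (b := -b) hab.neg_right hbc.neg_left (by simpa [rowDet_neg_mid] using hdet)
      (by simpa using hb) (by simpa using hbq')
  wlog hcq : 0 ≤ c.2.1 ∧ c.2.2 ≤ 0 generalizing c
  · have hcq' := (mul_nonpos_iff.1 hc).resolve_left hcq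
    simpa using this (c := -c) (by simpa using hc) hbc.neg_right
      (by simpa [rowDet_neg_right] using hdet) (by simpa using hcq')
  exact hab.exists_isWitness_of_quadrant hind hbc hdet hbq.1 hbq.2 hcq.1 hcq.2

end ConsecutiveBest

theorem theorem3_general (α₁ α₂ : ℝ) (h : ZLinIndep α₁ α₂) (a b c : ℤ × ℤ × ℤ)
    (hab : ConsecutiveBest α₁ α₂ a b) (hbc : ConsecutiveBest α₁ α₂ b c)
    (hdet : Matrix.det !![a.1, a.2.1, a.2.2; b.1, b.2.1, b.2.2; c.1, c.2.1, c.2.2] ≠ 0) :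
    ∃ x : ℤ × ℤ, 0 < x.1 ∧ 0 < x.2 ∧
      ((max x.1 x.2 : ℤ) : ℝ) ≤ 240 * (hgt c : ℝ) ^ tau * (hgt b : ℝ) ^ (-(1 / tau)) ∧
      nint (α₁ * x.1 + α₂ * x.2) ≤
        24 ^ tau * (hgt b : ℝ) ^ ((1 - tau) / tau) * ((max x.1 x.2 : ℤ) : ℝ) ^ (-tau) := by
  obtain ⟨n, hn⟩ := hab.exists_isWitness h hbc hdet
  exact hn.exists_pos_point hbc.hgt_left_pos (hbc.hgt_left_pos.trans hbc.hgt_lt)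

/-- Theorem 3: for best approximations a = m_{ν−1}, b = m_ν, c = m_{ν+1}, d = m_{ν+2} with
det(m_{ν−1}, m_ν, m_{ν+1}) ≠ 0, either (i) or (ii) holds. -/
theorem theorem3 (α₁ α₂ : ℝ) (h : ZLinIndep α₁ α₂)
    (a b c d : ℤ × ℤ × ℤ)
    (hab : ConsecutiveBest α₁ α₂ a b) (hbc : ConsecutiveBest α₁ α₂ b c)
    (hcd : ConsecutiveBest α₁ α₂ c d)
    (hdet : Matrix.det !![a.1, a.2.1, a.2.2; b.1, b.2.1, b.2.2; c.1, c.2.1, c.2.2] ≠ 0) :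
    (∃ x : ℤ × ℤ, 0 < x.1 ∧ 0 < x.2 ∧
        (hgt d : ℝ) ≤ ((max x.1 x.2 : ℤ) : ℝ) ∧
        ((max x.1 x.2 : ℤ) : ℝ) ≤ 4 * (hgt d : ℝ) ∧
        nint (α₁ * x.1 + α₂ * x.2) ≤ 16 * ((max x.1 x.2 : ℤ) : ℝ) ^ (-2 : ℝ)) ∨
    (∃ x : ℤ × ℤ, 0 < x.1 ∧ 0 < x.2 ∧
        ((max x.1 x.2 : ℤ) : ℝ) ≤ 240 * (hgt c : ℝ) ^ tau * (hgt b : ℝ) ^ (-(1 / tau)) ∧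
        nint (α₁ * x.1 + α₂ * x.2) ≤
          24 ^ tau * (hgt b : ℝ) ^ ((1 - tau) / tau) * ((max x.1 x.2 : ℤ) : ℝ) ^ (-tau)) :=
  Or.inr (theorem3_general α₁ α₂ h a b c hab hbc hdet)
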